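/- arXiv:1605.02469 — 5 statements merged into one kernel-verified Lean document; each statement's English description precedes it below -/
import Mathlib

section
/- Let s ≥ 1 and let A be the s×s matrix over ℂ with A_{xy} = 1 if x > y and A_{xy} = 0 otherwise (the adjacency matrix of the transitive tournament on s vertices). Then the eigenvalues of the Hermitian matrix S = i(A − Aᵀ) are exactly the numbers cot((2i−1)π/(2s)) for i = 1, 2, …, s. -/
open Matrix Finset

/-- The Seidel matrix `S = i (A - Aᵀ)` of a digraph with adjacency matrix `A`. -/
def Seidel {v : ℕ} (A : Matrix (Fin v) (Fin v) ℂ) : Matrix (Fin v) (Fin v) ℂ :=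
  Complex.I • (A - Aᵀ)

/-!
If `wⁿ = -1`, telescoping the geometric sums before and after each vertex shows that
`(1, w, …, wⁿ⁻¹)` is an eigenvector of the Seidel matrix for the eigenvalue `i (w + 1) / (w - 1)`.
For `w = exp (2 i θ)` this eigenvalue is `cot θ`, and `wⁿ = -1` holds when `θ` is an odd multiple of
`π / (2 n)`. The `n` such angles in `(0, π)` have pairwise distinct cotangents, so these `n`
eigenvalues are all of them, each simple.
-/

section HermitianEigenvalues

variable {𝕜 ι : Type*} [RCLike 𝕜] [Fintype ι] [DecidableEq ι] {M : Matrix ι ι 𝕜}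

lemma mem_range_eigenvalues_of_mulVec_eq_smul (hM : M.IsHermitian) {c : ℝ} {v : ι → 𝕜}
    (hv : v ≠ 0) (hMv : M *ᵥ v = (c : 𝕜) • v) : c ∈ Set.range hM.eigenvalues := by
  have hev : Module.End.HasEigenvector (toLin' M) (algebraMap ℝ 𝕜 c) v :=
    ⟨Module.End.mem_eigenspace_iff.mpr hMv, hv⟩
  rw [← hM.spectrum_real_eq_range_eigenvalues, ← spectrum.algebraMap_mem_iff 𝕜, ← spectrum_toLin']
  exact (Module.End.hasEigenvalue_of_hasEigenvector hev).mem_spectrum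

lemma exists_perm_eigenvalues_eq_of_injective (hM : M.IsHermitian) {f : ι → ℝ}
    (hf : Function.Injective f) (hmem : ∀ i, f i ∈ Set.range hM.eigenvalues) :
    ∃ σ : Equiv.Perm ι, ∀ i, hM.eigenvalues (σ i) = f i := by
  choose g hg using hmem
  have hg_inj : Function.Injective g := fun i j hij ↦ hf (by rw [← hg i, ← hg j, hij])
  exact ⟨Equiv.ofBijective g (Finite.injective_iff_bijective.mp hg_inj), hg⟩

end HermitianEigenvalues

section TransitiveTournament

/-- The adjacency matrix of the transitive tournament on `n` vertices, with entries in `R`: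
the strictly lower triangular all-ones matrix. -/
def transitiveTournament (R : Type*) [Zero R] [One R] (n : ℕ) : Matrix (Fin n) (Fin n) R :=
  of fun x y ↦ if (y : ℕ) < (x : ℕ) then 1 else 0

variable {R : Type*} {n : ℕ}

lemma transitiveTournament_mulVec [NonAssocSemiring R] (v : ℕ → R) (x : Fin n) :
    (transitiveTournament R n *ᵥ fun y ↦ v y) x = ∑ y ∈ range x, v y := by
  have hfilter : {y ∈ range n | y < (x : ℕ)} = range x := by grind
  simp only [transitiveTournament, mulVec, dotProduct, of_apply, ite_mul, one_mul, zero_mul]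
  rw [← Finset.sum_range fun y ↦ if y < (x : ℕ) then v y else 0, ← sum_filter, hfilter]

lemma transitiveTournament_transpose_mulVec [NonAssocSemiring R] (v : ℕ → R) (x : Fin n) :
    ((transitiveTournament R n)ᵀ *ᵥ fun y ↦ v y) x = ∑ y ∈ Ico (x + 1 : ℕ) n, v y := by
  have hfilter : {y ∈ range n | (x : ℕ) < y} = Ico (x + 1 : ℕ) n := by grind
  simp only [transitiveTournament, mulVec, dotProduct, transpose_apply, of_apply, ite_mul, one_mul,
    zero_mul]
  rw [← Finset.sum_range fun y ↦ if (x : ℕ) < y then v y else 0, ← sum_filter, hfilter]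

lemma sub_one_mul_transitiveTournament_sub_transpose_mulVec_pow [CommRing R] (w : R) (x : Fin n) :
    (w - 1) * ((transitiveTournament R n - (transitiveTournament R n)ᵀ) *ᵥ
      fun y ↦ w ^ (y : ℕ)) x = (w + 1) * w ^ (x : ℕ) - (w ^ n + 1) := by
  have hbefore := geom_sum_mul w x
  have hafter := geom_sum_Ico_mul w (show (x + 1 : ℕ) ≤ n from x.isLt)
  rw [sub_mulVec, Pi.sub_apply, transitiveTournament_mulVec (w ^ ·),
    transitiveTournament_transpose_mulVec (w ^ ·)]
  linear_combination hbefore - hafter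

lemma seidel_transitiveTournament_mulVec_pow {w : ℂ} (hw : w ^ n = -1) :
    Seidel (transitiveTournament ℂ n) *ᵥ (fun y ↦ w ^ (y : ℕ)) =
      ((w + 1) / (Complex.I * (1 - w))) • fun y : Fin n ↦ w ^ (y : ℕ) := by
  have hw_ne : 1 - w ≠ 0 := by
    rw [sub_ne_zero]
    rintro rfl
    norm_num at hw
  ext x
  have hskew := sub_one_mul_transitiveTournament_sub_transpose_mulVec_pow w x
  rw [Seidel, smul_mulVec, Pi.smul_apply, Pi.smul_apply, smul_eq_mul, smul_eq_mul,
    div_mul_eq_mul_div, eq_div_iff (mul_ne_zero Complex.I_ne_zero hw_ne)]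
  linear_combination hskew - hw + (1 - w) *
    ((transitiveTournament ℂ n - (transitiveTournament ℂ n)ᵀ) *ᵥ fun y ↦ w ^ (y : ℕ)) x *
      Complex.I_sq

lemma cot_mem_range_eigenvalues_seidel_transitiveTournament
    (hH : (Seidel (transitiveTournament ℂ n)).IsHermitian) {θ : ℝ}
    (hθ : Complex.exp (2 * Complex.I * θ) ^ n = -1) :
    Real.cot θ ∈ Set.range hH.eigenvalues := by
  have hn : n ≠ 0 := by
    rintro rfl
    norm_num at hθ
  refine mem_range_eigenvalues_of_mulVec_eq_smul hH
    (v := fun y ↦ Complex.exp (2 * Complex.I * θ) ^ (y : ℕ)) (fun hzero ↦ ?_) ?_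
  · exact pow_ne_zero _ (Complex.exp_ne_zero _) (congrFun hzero ⟨0, Nat.pos_of_ne_zero hn⟩)
  · rw [seidel_transitiveTournament_mulVec_pow hθ, ← Complex.cot_eq_exp_ratio]
    simp only [Complex.coe_algebraMap, Complex.ofReal_cot]

end TransitiveTournament

lemma cot_eq_tan_pi_div_two_sub (x : ℝ) : Real.cot x = Real.tan (Real.pi / 2 - x) := by
  rw [Real.tan_pi_div_two_sub, ← Real.cot_inv_eq_tan, inv_inv]

lemma injOn_cot : Set.InjOn Real.cot (Set.Ioo 0 Real.pi) := by
  intro x hx y hy hxy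
  rw [cot_eq_tan_pi_div_two_sub, cot_eq_tan_pi_div_two_sub] at hxy
  have hsub : Real.pi / 2 - x = Real.pi / 2 - y :=
    Real.injOn_tan ⟨by linarith [hx.2], by linarith [hx.1]⟩
      ⟨by linarith [hy.2], by linarith [hy.1]⟩ hxy
  linarith

section OddAngle

/-- The `k`-th odd multiple `(2k + 1)π / (2n)` of `π / (2n)`, counting from `k = 0`. The `n`-th
roots of `-1` are `exp (2 i θ)` for these angles `θ`. -/
noncomputable def oddAngle (n k : ℕ) : ℝ :=
  (2 * (k : ℝ) + 1) * Real.pi / (2 * (n : ℝ))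

variable {n : ℕ}

lemma oddAngle_mem_Ioo {k : ℕ} (hk : k < n) : oddAngle n k ∈ Set.Ioo 0 Real.pi := by
  have hn : (0 : ℝ) < n := by exact_mod_cast hk.pos
  have hkn : (2 * (k : ℝ) + 1) < 2 * n := by exact_mod_cast (by lia : 2 * k + 1 < 2 * n)
  refine ⟨by unfold oddAngle; positivity, ?_⟩
  rw [oddAngle, div_lt_iff₀ (by positivity), mul_comm Real.pi]
  exact mul_lt_mul_of_pos_right hkn Real.pi_pos

lemma oddAngle_injective (hn : n ≠ 0) : Function.Injective (oddAngle n) := by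
  intro j k hjk
  have hn' : (n : ℝ) ≠ 0 := Nat.cast_ne_zero.mpr hn
  simpa [oddAngle, hn', Real.pi_ne_zero] using hjk

lemma exp_two_mul_I_mul_oddAngle_pow (hn : n ≠ 0) (k : ℕ) :
    Complex.exp (2 * Complex.I * oddAngle n k) ^ n = -1 := by
  have hn' : (n : ℂ) ≠ 0 := Nat.cast_ne_zero.mpr hn
  have hangle : (n : ℂ) * (2 * Complex.I * oddAngle n k) =
      Real.pi * Complex.I + k * (2 * Real.pi * Complex.I) := by
    simp only [oddAngle]
    push_cast
    field_simp
    ring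
  rw [← Complex.exp_nat_mul, hangle, Complex.exp_add, Complex.exp_pi_mul_I,
    Complex.exp_nat_mul_two_pi_mul_I, mul_one]

lemma cot_oddAngle_injective :
    Function.Injective fun i : Fin n ↦ Real.cot (oddAngle n i) := fun i j hij ↦
  Fin.ext <| oddAngle_injective i.pos.ne' <|
    injOn_cot (oddAngle_mem_Ioo i.isLt) (oddAngle_mem_Ioo j.isLt) hij

end OddAngle

/-- The eigenvalues of the Seidel matrix of the transitive tournament on `s ≥ 1` vertices
are exactly `cot((2i-1)π/(2s))`, `i = 1, …, s`. -/
theorem seidel_eigenvalues_transitive_tournament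
    (s : ℕ) (hs : 1 ≤ s)
    (A : Matrix (Fin s) (Fin s) ℂ)
    (hA : ∀ x y : Fin s, A x y = if (y : ℕ) < (x : ℕ) then 1 else 0)
    (hH : (Seidel A).IsHermitian) :
    ∃ σ : Equiv.Perm (Fin s), ∀ i : Fin s,
      hH.eigenvalues (σ i) =
        Real.cot ((2 * ((i : ℕ) : ℝ) + 1) * Real.pi / (2 * (s : ℝ))) := by
  obtain rfl : A = transitiveTournament ℂ s := Matrix.ext hA
  have hs' : s ≠ 0 := Nat.one_le_iff_ne_zero.mp hs
  exact exists_perm_eigenvalues_eq_of_injective hH cot_oddAngle_injective fun i ↦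
    cot_mem_range_eigenvalues_seidel_transitiveTournament hH (exp_two_mul_I_mul_oddAngle_pow hs' i)
end

section
/- Let G be a digraph on v vertices, let Γ be a transitive subtournament of size s in G with characteristic vector χ ∈ ℂ^v, and let S_G be the Seidel matrix of G. Then s(s²−1)/3 ≤ χ* S_G S_G* χ, with equality if and only if for every vertex x ∉ V(Γ), the number of vertices y ∈ V(Γ) with an arc (y,x) equals the number of vertices y ∈ V(Γ) with an arc (x,y). -/
open Matrix Finset

/-- A digraph on `v` vertices, given by its adjacency matrix: entries in `{0,1}`, zero diagonal. -/
def IsDigraph {v : ℕ} (A : Matrix (Fin v) (Fin v) ℂ) : Prop :=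
  (∀ x y, A x y = 0 ∨ A x y = 1) ∧ ∀ x, A x x = 0

/-- `T` is a transitive subtournament of the digraph with adjacency matrix `A`. -/
def IsTransSubtournament {v : ℕ} (A : Matrix (Fin v) (Fin v) ℂ) (T : Finset (Fin v)) : Prop :=
  (∀ x ∈ T, ∀ y ∈ T, x ≠ y → Xor' (A x y = 1) (A y x = 1)) ∧
  (∀ x ∈ T, ∀ y ∈ T, ∀ z ∈ T, A x y = 1 → A y z = 1 → A x z = 1)

/-!
Since `S` is Hermitian, `χ* S S* χ = ‖S χ‖²`, and up to the factor `-i` the `x`-entry of `S χ` is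
the number of arcs from `T` to `x` minus the number of arcs from `x` to `T`. The vertices of a
transitive tournament on `s` vertices have in-degrees `0, 1, …, s - 1` and in-degree plus
out-degree equal to `s - 1`, so the entries indexed by `T` contribute
`∑ k < s, (2k - (s - 1))² = s(s² - 1)/3` to `‖S χ‖²`. The remaining entries contribute a sum of
squares, which vanishes exactly when each of them is zero.
-/

theorem three_mul_sum_range_sq_two_mul_sub (n : ℕ) :
    3 * ∑ k ∈ range n, (2 * (k : ℤ) - (n - 1)) ^ 2 = n * ((n : ℤ) ^ 2 - 1) := by
  have sum_sq_sub_const (c : ℤ) : 3 * ∑ k ∈ range n, (2 * (k : ℤ) - c) ^ 2 =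
      2 * n * (n - 1) * (2 * n - 1) - 6 * c * n * (n - 1) + 3 * c ^ 2 * n := by
    induction n with
    | zero => simp
    | succ n ih =>
      rw [sum_range_succ, mul_add, ih]
      push_cast
      ring
  rw [sum_sq_sub_const]
  ring

section Relation

variable {α : Type*} {r : α → α → Prop} [DecidableRel r] {T : Finset α}

theorem card_filter_rel_lt_of_rel (irrefl : ∀ x ∈ T, ¬r x x)
    (trans : ∀ x ∈ T, ∀ y ∈ T, ∀ z ∈ T, r x y → r y z → r x z)
    {x y : α} (hx : x ∈ T) (hy : y ∈ T) (hxy : r x y) :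
    #{z ∈ T | r z x} < #{z ∈ T | r z y} := by
  refine card_lt_card ((ssubset_iff_of_subset fun z hz ↦ ?_).2 ⟨x, ?_, ?_⟩)
  · obtain ⟨hzT, hzx⟩ := mem_filter.1 hz
    exact mem_filter.2 ⟨hzT, trans z hzT x hx y hy hzx hxy⟩
  · exact mem_filter.2 ⟨hx, hxy⟩
  · exact fun hx' ↦ irrefl x hx (mem_filter.1 hx').2

theorem injOn_card_filter_rel (irrefl : ∀ x ∈ T, ¬r x x)
    (trans : ∀ x ∈ T, ∀ y ∈ T, ∀ z ∈ T, r x y → r y z → r x z)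
    (total : ∀ x ∈ T, ∀ y ∈ T, x ≠ y → r x y ∨ r y x) :
    Set.InjOn (fun x ↦ #{z ∈ T | r z x}) T := by
  intro x hx y hy hcard
  by_contra hne
  rcases total x hx y hy hne with hxy | hyx
  · exact (card_filter_rel_lt_of_rel irrefl trans hx hy hxy).ne hcard
  · exact (card_filter_rel_lt_of_rel irrefl trans hy hx hyx).ne' hcard

theorem image_card_filter_rel (irrefl : ∀ x ∈ T, ¬r x x)
    (trans : ∀ x ∈ T, ∀ y ∈ T, ∀ z ∈ T, r x y → r y z → r x z)
    (total : ∀ x ∈ T, ∀ y ∈ T, x ≠ y → r x y ∨ r y x) :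
    T.image (fun x ↦ #{z ∈ T | r z x}) = range #T := by
  apply eq_of_subset_of_card_le
  · refine image_subset_iff.2 fun x hx ↦ mem_range.2 (card_lt_card ?_)
    exact filter_ssubset.2 ⟨x, hx, irrefl x hx⟩
  · rw [card_range, card_image_of_injOn (injOn_card_filter_rel irrefl trans total)]

theorem card_filter_rel_add_card_filter_rel_swap (irrefl : ∀ x ∈ T, ¬r x x)
    (trans : ∀ x ∈ T, ∀ y ∈ T, ∀ z ∈ T, r x y → r y z → r x z)
    (total : ∀ x ∈ T, ∀ y ∈ T, x ≠ y → r x y ∨ r y x) {x : α} (hx : x ∈ T) :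
    #{y ∈ T | r y x} + #{y ∈ T | r x y} + 1 = #T := by
  classical
  have disjoint : Disjoint {y ∈ T | r y x} {y ∈ T | r x y} :=
    disjoint_filter.2 fun y hy hyx hxy ↦ irrefl x hx (trans x hx y hy x hx hxy hyx)
  have union_eq_erase : {y ∈ T | r y x} ∪ {y ∈ T | r x y} = T.erase x := by
    ext y
    simp only [← filter_or, mem_filter, mem_erase]
    constructor
    · rintro ⟨hy, hyx⟩
      refine ⟨?_, hy⟩
      rintro rfl
      exact irrefl y hy (or_self_iff.1 hyx)
    · rintro ⟨hne, hy⟩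
      exact ⟨hy, total y hy x hx hne⟩
  rw [← card_union_of_disjoint disjoint, union_eq_erase, card_erase_add_one hx]

variable (r T) in
/-- The number of `r`-arcs from `T` to `x` minus the number of `r`-arcs from `x` to `T`. It is
integer-valued, so the subtraction does not truncate; `x` itself need not belong to `T`. -/
def netInDegree (x : α) : ℤ :=
  (#{y ∈ T | r y x} : ℤ) - #{y ∈ T | r x y}

theorem netInDegree_eq_zero_iff {x : α} :
    netInDegree r T x = 0 ↔ #{y ∈ T | r y x} = #{y ∈ T | r x y} := by
  rw [netInDegree, sub_eq_zero, Nat.cast_inj]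

theorem three_mul_sum_sq_netInDegree (irrefl : ∀ x ∈ T, ¬r x x)
    (trans : ∀ x ∈ T, ∀ y ∈ T, ∀ z ∈ T, r x y → r y z → r x z)
    (total : ∀ x ∈ T, ∀ y ∈ T, x ≠ y → r x y ∨ r y x) :
    3 * ∑ x ∈ T, netInDegree r T x ^ 2 = #T * ((#T : ℤ) ^ 2 - 1) := by
  have netInDegree_eq (x : α) (hx : x ∈ T) :
      netInDegree r T x = 2 * (#{y ∈ T | r y x} : ℤ) - (#T - 1) := by
    have := card_filter_rel_add_card_filter_rel_swap irrefl trans total hx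
    unfold netInDegree
    lia
  calc 3 * ∑ x ∈ T, netInDegree r T x ^ 2
    _ = 3 * ∑ x ∈ T, (2 * (#{y ∈ T | r y x} : ℤ) - (#T - 1)) ^ 2 := by
      rw [sum_congr rfl fun x hx ↦ by rw [netInDegree_eq x hx]]
    _ = 3 * ∑ k ∈ range #T, (2 * (k : ℤ) - (#T - 1)) ^ 2 := by
      rw [← image_card_filter_rel irrefl trans total,
        sum_image (injOn_card_filter_rel irrefl trans total)]
    _ = #T * ((#T : ℤ) ^ 2 - 1) := three_mul_sum_range_sq_two_mul_sub #T

end Relation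

theorem star_dotProduct_mul_conjTranspose_mulVec {m n 𝕜 : Type*} [Fintype m] [Fintype n]
    [RCLike 𝕜] (M : Matrix m n 𝕜) (u : m → 𝕜) :
    star u ⬝ᵥ ((M * Mᴴ) *ᵥ u) = ((∑ j, ‖(Mᴴ *ᵥ u) j‖ ^ 2 : ℝ) : 𝕜) := by
  have form_eq : star u ⬝ᵥ ((M * Mᴴ) *ᵥ u) = star (Mᴴ *ᵥ u) ⬝ᵥ (Mᴴ *ᵥ u) := by
    rw [← mulVec_mulVec, dotProduct_mulVec, star_mulVec, conjTranspose_conjTranspose]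
  rw [form_eq, dotProduct]
  push_cast
  exact sum_congr rfl fun j _ ↦ RCLike.conj_mul _

section Digraph

/-- The arc relation of the digraph with adjacency matrix `A`, used to apply the results on
relations to digraphs. -/
def IsArc {V : Type*} (A : Matrix V V ℂ) (x y : V) : Prop :=
  A x y = 1

noncomputable instance {V : Type*} (A : Matrix V V ℂ) : DecidableRel (IsArc A) :=
  fun x y ↦ inferInstanceAs (Decidable (A x y = 1))

variable {v : ℕ} {A : Matrix (Fin v) (Fin v) ℂ}

theorem IsDigraph.apply_eq_ite (hA : IsDigraph A) (x y : Fin v) :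
    A x y = if IsArc A x y then 1 else 0 := by
  rcases hA.1 x y with h | h <;> simp [IsArc, h]

theorem IsDigraph.isHermitian_seidel (hA : IsDigraph A) : (Seidel A).IsHermitian := by
  have star_apply (x y : Fin v) : star (A x y) = A x y := by
    rcases hA.1 x y with h | h <;> simp [h]
  ext x y
  simp only [Seidel, conjTranspose_apply, Matrix.smul_apply, Matrix.sub_apply, transpose_apply,
    smul_eq_mul, star_mul', star_sub, star_apply, Complex.star_def, Complex.conj_I]
  ring

theorem IsDigraph.seidel_mulVec_indicator (hA : IsDigraph A) (T : Finset (Fin v)) (x : Fin v) :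
    (Seidel A *ᵥ fun y ↦ if y ∈ T then 1 else 0) x =
      -Complex.I * netInDegree (IsArc A) T x := by
  have sum_apply_left : ∑ y ∈ T, A x y = #{y ∈ T | IsArc A x y} := by
    rw [sum_congr rfl fun y _ ↦ hA.apply_eq_ite x y, sum_boole]
  have sum_apply_right : ∑ y ∈ T, A y x = #{y ∈ T | IsArc A y x} := by
    rw [sum_congr rfl fun y _ ↦ hA.apply_eq_ite y x, sum_boole]
  calc (Seidel A *ᵥ fun y ↦ if y ∈ T then 1 else 0) x
    _ = ∑ y ∈ T, Complex.I * (A x y - A y x) := by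
      simp [mulVec, dotProduct, Seidel]
    _ = Complex.I * (#{y ∈ T | IsArc A x y} - #{y ∈ T | IsArc A y x}) := by
      rw [← mul_sum, sum_sub_distrib, sum_apply_left, sum_apply_right]
    _ = -Complex.I * netInDegree (IsArc A) T x := by
      rw [netInDegree]
      push_cast
      ring

theorem IsDigraph.re_seidel_form_indicator (hA : IsDigraph A) (T : Finset (Fin v)) :
    (star (fun y ↦ if y ∈ T then 1 else 0) ⬝ᵥ
      ((Seidel A * (Seidel A)ᴴ) *ᵥ fun y ↦ if y ∈ T then 1 else 0)).re =
      ∑ x, (netInDegree (IsArc A) T x : ℝ) ^ 2 := by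
  rw [star_dotProduct_mul_conjTranspose_mulVec, RCLike.ofReal_eq_complex_ofReal, Complex.ofReal_re]
  refine sum_congr rfl fun x _ ↦ ?_
  rw [hA.isHermitian_seidel.eq, hA.seidel_mulVec_indicator]
  simp

theorem IsTransSubtournament.sum_sq_netInDegree {T : Finset (Fin v)}
    (hT : IsTransSubtournament A T) (hA : IsDigraph A) :
    ∑ x ∈ T, (netInDegree (IsArc A) T x : ℝ) ^ 2 =
      #T * ((#T : ℝ) ^ 2 - 1) / 3 := by
  have three_mul_sum := three_mul_sum_sq_netInDegree (r := IsArc A)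
    (fun x _ ↦ by simp [IsArc, hA.2 x]) hT.2 (fun x hx y hy hne ↦ Xor.or (hT.1 x hx y hy hne))
  rw [eq_div_iff three_ne_zero, mul_comm]
  exact_mod_cast three_mul_sum

end Digraph

/-- If `χ` is the characteristic vector of a transitive subtournament `Γ` of size `s` in a
digraph `G`, then `s(s²-1)/3 ≤ χ* S_G S_G* χ`, with equality iff for every vertex
`x ∉ V(Γ)` the number of vertices of `Γ` dominating `x` equals the number of vertices of
`Γ` dominated by `x`. -/
theorem quadratic_form_lower_bound_with_equality
    {v s : ℕ} (A : Matrix (Fin v) (Fin v) ℂ) (hA : IsDigraph A)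
    (T : Finset (Fin v)) (hT : IsTransSubtournament A T) (hTcard : T.card = s)
    (χ : Fin v → ℂ) (hχ : ∀ x, χ x = if x ∈ T then 1 else 0) :
    (s : ℝ) * ((s : ℝ) ^ 2 - 1) / 3 ≤
      (star χ ⬝ᵥ ((Seidel A * (Seidel A)ᴴ) *ᵥ χ)).re ∧
    ((star χ ⬝ᵥ ((Seidel A * (Seidel A)ᴴ) *ᵥ χ)).re = (s : ℝ) * ((s : ℝ) ^ 2 - 1) / 3 ↔
      ∀ x, x ∉ T →
        (T.filter fun y => A y x = 1).card = (T.filter fun y => A x y = 1).card) := by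
  obtain rfl : χ = fun x ↦ if x ∈ T then 1 else 0 := funext hχ
  subst hTcard
  rw [hA.re_seidel_form_indicator, ← sum_add_sum_compl T, hT.sum_sq_netInDegree hA]
  have sq_nonneg_compl : ∀ x ∈ Tᶜ, 0 ≤ (netInDegree (IsArc A) T x : ℝ) ^ 2 :=
    fun x _ ↦ sq_nonneg _
  refine ⟨le_add_of_nonneg_right (sum_nonneg sq_nonneg_compl), ?_⟩
  rw [add_eq_left, sum_eq_zero_iff_of_nonneg sq_nonneg_compl]
  simp only [mem_compl, sq_eq_zero_iff, Int.cast_eq_zero, netInDegree_eq_zero_iff]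
  rfl
end

section
/- Let G be a doubly regular tournament on v vertices containing a transitive subtournament of size s. Then s ≤ (−3 + √(13 + 12v))/2. -/
open Matrix Finset

/-- A tournament: a digraph with `A + Aᵀ = J - I`. -/
def IsTournament {v : ℕ} (A : Matrix (Fin v) (Fin v) ℂ) : Prop :=
  IsDigraph A ∧ A + Aᵀ = Matrix.of (fun _ _ => 1) - 1

/-- A doubly regular tournament: every vertex dominates exactly `(v-1)/2` vertices and every
pair of distinct vertices jointly dominates exactly `(v-3)/4` vertices (so `v ≡ 3 (mod 4)`). -/
def IsDRT {v : ℕ} (A : Matrix (Fin v) (Fin v) ℂ) : Prop :=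
  IsTournament A ∧ v % 4 = 3 ∧
  (∀ x, (univ.filter fun y => A x y = 1).card = (v - 1) / 2) ∧
  (∀ x y, x ≠ y → (univ.filter fun z => A x z = 1 ∧ A y z = 1).card = (v - 3) / 4)

/-!
Let `S = A - Aᵀ`. Double regularity gives `SᵀS = v • 1 - J`, so the vector of row sums of `S` over
the columns in a set `T` of size `s` has squared norm `vs - s²`. If `T` is transitive, its scores
are `0, …, s - 1`, so the `s` rows indexed by `T` alone contribute
`∑ i < s, (2i - (s - 1))² = s(s² - 1)/3`. Comparing the two gives `s² + 3s - 1 ≤ 3v`.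
-/

local notation "J" => Matrix.of fun _ _ => 1

section Gram

variable {m n R : Type*} [Fintype m] [DecidableEq n] [CommRing R]

lemma sum_sq_sum_of_transpose_mul_self (M : Matrix m n R) {a b : R}
    (hM : Mᵀ * M = a • 1 + b • J) (T : Finset n) :
    ∑ x, (∑ t ∈ T, M x t) ^ 2 = a * #T + b * #T ^ 2 := by
  calc ∑ x, (∑ t ∈ T, M x t) ^ 2
      = ∑ t ∈ T, ∑ u ∈ T, (Mᵀ * M) t u := by
        simp only [sq, sum_mul_sum, mul_apply, transpose_apply]
        rw [sum_comm]
        exact sum_congr rfl fun t _ => sum_comm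
    _ = ∑ _ ∈ T, (a + b * #T) := by
        refine sum_congr rfl fun t ht => ?_
        simp [hM, sum_add_distrib, one_apply, ht, mul_comm]
    _ = a * #T + b * #T ^ 2 := by
        rw [sum_const, nsmul_eq_mul]
        ring

lemma transpose_mul_self_sub_transpose [Fintype n] (B : Matrix n n R) {k l : R}
    (hadd : B + Bᵀ = J - 1) (hrow : B * J = k • J) (hgram : B * Bᵀ = (k - l) • 1 + l • J) :
    (B - Bᵀ)ᵀ * (B - Bᵀ) =
      (4 * k - 4 * l - 1) • 1 + (4 * l + Fintype.card n - 4 * k) • J := by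
  have hJt : (J : Matrix n n R)ᵀ = J := rfl
  have hJJ : (J : Matrix n n R) * J = (Fintype.card n : R) • J := by
    ext x y
    simp [mul_apply]
  have hcol : J * Bᵀ = k • J := by
    simpa only [transpose_mul, transpose_smul, hJt] using congrArg transpose hrow
  have htranspose : Bᵀ = J - 1 - B := eq_sub_of_add_eq' hadd
  calc (B - Bᵀ)ᵀ * (B - Bᵀ)
      = (B - Bᵀ) * (B - Bᵀ)ᵀ := by
        simp only [transpose_sub, transpose_transpose]
        noncomm_ring
    _ = (2 • B - J + 1) * (2 • Bᵀ - J + 1) := by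
        rw [show B - Bᵀ = 2 • B - J + 1 by rw [htranspose]; abel]
        simp only [transpose_add, transpose_sub, transpose_smul, transpose_one, hJt]
    _ = 4 • (B * Bᵀ) - 2 • (B * J) - 2 • (J * Bᵀ) + J * J + 2 • (B + Bᵀ) - 2 • J + 1 := by
        noncomm_ring
    _ = _ := by
        rw [hgram, hrow, hcol, hJJ, hadd]
        module

end Gram

lemma sum_range_two_mul_sub_sq {K : Type*} [Field K] [CharZero K] (a : K) (n : ℕ) :
    ∑ i ∈ range n, (2 * (i : K) - a) ^ 2 =
      2 * n * (n - 1) * (2 * n - 1) / 3 - 2 * a * n * (n - 1) + n * a ^ 2 := by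
  induction n with
  | zero => simp
  | succ n ih =>
    rw [sum_range_succ, ih]
    push_cast
    ring

/-- The relation `r` strictly totally orders the finite set `T`. Only pairs inside `T` are
constrained, so this describes the transitive subtournaments of an arbitrary digraph. -/
structure StrictlyTotallyOrders {V : Type*} (r : V → V → Prop) (T : Finset V) : Prop where
  irrefl : ∀ x ∈ T, ¬ r x x
  trans : ∀ x ∈ T, ∀ y ∈ T, ∀ z ∈ T, r x y → r y z → r x z
  connected : ∀ x ∈ T, ∀ y ∈ T, x ≠ y → r x y ∨ r y x

/-- The score of `x` in `T`: the number of vertices of `T` that `x` dominates. -/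
def score {V : Type*} (r : V → V → Prop) [DecidableRel r] (T : Finset V) (x : V) : ℕ :=
  #{y ∈ T | r x y}

/-- The real `0`-`1` adjacency matrix of the relation `r`. -/
def relMatrix {V : Type*} (r : V → V → Prop) [DecidableRel r] : Matrix V V ℝ :=
  Matrix.of fun x y => if r x y then 1 else 0

/-- The skew adjacency matrix of `r`; for a tournament, its entry at `(x, y)` with `x ≠ y` is `1`
if `x` dominates `y` and `-1` otherwise. -/
def skewMatrix {V : Type*} (r : V → V → Prop) [DecidableRel r] : Matrix V V ℝ :=
  relMatrix r - (relMatrix r)ᵀ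

section RelMatrix

variable {V : Type*} {r : V → V → Prop} [DecidableRel r]

lemma relMatrix_apply (x y : V) : relMatrix r x y = if r x y then 1 else 0 := rfl

lemma relMatrix_mul_ones_apply [Fintype V] (x y : V) :
    (relMatrix r * J : Matrix V V ℝ) x y = #{z | r x z} := by
  simp [mul_apply, relMatrix_apply]

lemma relMatrix_mul_transpose_apply [Fintype V] (x y : V) :
    (relMatrix r * (relMatrix r)ᵀ) x y = #{z | r x z ∧ r y z} := by
  simp [mul_apply, relMatrix_apply, ← ite_and, and_comm]

end RelMatrix

namespace StrictlyTotallyOrders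

variable {V : Type*} {r : V → V → Prop} {T : Finset V} {x y : V}

lemma asymm (h : StrictlyTotallyOrders r T) (hx : x ∈ T) (hy : y ∈ T) (hxy : r x y) : ¬ r y x :=
  fun hyx => h.irrefl x hx (h.trans x hx y hy x hx hxy hyx)

variable [DecidableRel r]

lemma score_lt_score (h : StrictlyTotallyOrders r T) (hx : x ∈ T) (hy : y ∈ T) (hxy : r x y) :
    score r T y < score r T x := by
  refine card_lt_card ((ssubset_iff_of_subset fun z hz => ?_).2
    ⟨y, mem_filter.2 ⟨hy, hxy⟩, fun hyy => h.irrefl y hy (mem_filter.1 hyy).2⟩)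
  obtain ⟨hzT, hyz⟩ := mem_filter.1 hz
  exact mem_filter.2 ⟨hzT, h.trans x hx y hy z hzT hxy hyz⟩

lemma score_injOn (h : StrictlyTotallyOrders r T) : Set.InjOn (score r T) T := by
  intro x hx y hy hscore
  by_contra hne
  rcases h.connected x hx y hy hne with hxy | hyx
  · exact (h.score_lt_score hx hy hxy).ne' hscore
  · exact (h.score_lt_score hy hx hyx).ne hscore

lemma score_lt_card (h : StrictlyTotallyOrders r T) (hx : x ∈ T) : score r T x < #T :=
  card_lt_card (filter_ssubset.2 ⟨x, hx, h.irrefl x hx⟩)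

lemma image_score (h : StrictlyTotallyOrders r T) : T.image (score r T) = range #T :=
  eq_of_subset_of_card_le
    (image_subset_iff.2 fun _ hx => mem_range.2 (h.score_lt_card hx))
    (by rw [card_image_of_injOn h.score_injOn, card_range])

lemma sum_skewMatrix (h : StrictlyTotallyOrders r T) (hx : x ∈ T) :
    ∑ t ∈ T, skewMatrix r x t = 2 * score r T x - (#T - 1) := by
  classical
  have hentry : ∀ t ∈ T, skewMatrix r x t =
      2 * (if r x t then 1 else 0) - 1 + if x = t then 1 else 0 := by
    intro t ht
    rw [skewMatrix, Matrix.sub_apply, transpose_apply, relMatrix_apply, relMatrix_apply]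
    rcases eq_or_ne x t with rfl | hne
    · simp [h.irrefl x hx]
    · rcases h.connected x hx t ht hne with hxt | htx
      · norm_num [hxt, h.asymm hx ht hxt, hne]
      · norm_num [htx, h.asymm ht hx htx, hne]
  rw [sum_congr rfl hentry, sum_add_distrib, sum_sub_distrib, ← mul_sum, sum_boole,
    sum_ite_eq, if_pos hx, sum_const, nsmul_one, score]
  ring

lemma sum_sq_sum_skewMatrix (h : StrictlyTotallyOrders r T) :
    ∑ x ∈ T, (∑ t ∈ T, skewMatrix r x t) ^ 2 = #T * ((#T : ℝ) ^ 2 - 1) / 3 :=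
  calc ∑ x ∈ T, (∑ t ∈ T, skewMatrix r x t) ^ 2
      = ∑ x ∈ T, (2 * (score r T x : ℝ) - (#T - 1)) ^ 2 :=
        sum_congr rfl fun x hx => by rw [h.sum_skewMatrix hx]
    _ = ∑ i ∈ range #T, (2 * (i : ℝ) - (#T - 1)) ^ 2 := by
        rw [← h.image_score, sum_image h.score_injOn]
    _ = #T * ((#T : ℝ) ^ 2 - 1) / 3 := by
        rw [sum_range_two_mul_sub_sq]
        ring

lemma card_mul_card_sq_sub_one_div_three_le [Fintype V] [DecidableEq V]
    (h : StrictlyTotallyOrders r T) {a b : ℝ}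
    (hgram : (skewMatrix r)ᵀ * skewMatrix r = a • 1 + b • J) :
    #T * ((#T : ℝ) ^ 2 - 1) / 3 ≤ a * #T + b * #T ^ 2 := by
  rw [← h.sum_sq_sum_skewMatrix, ← sum_sq_sum_of_transpose_mul_self _ hgram]
  exact sum_le_sum_of_subset_of_nonneg (subset_univ T) fun _ _ _ => sq_nonneg _

end StrictlyTotallyOrders

/-- `Dominates A x y` says that `(x, y)` is an arc of the digraph with adjacency matrix `A`. -/
def Dominates {v : ℕ} (A : Matrix (Fin v) (Fin v) ℂ) (x y : Fin v) : Prop :=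
  A x y = 1

noncomputable instance {v : ℕ} (A : Matrix (Fin v) (Fin v) ℂ) : DecidableRel (Dominates A) :=
  fun x y => inferInstanceAs (Decidable (A x y = 1))

section DoublyRegular

variable {v : ℕ} {A : Matrix (Fin v) (Fin v) ℂ}

lemma IsDigraph.map_relMatrix_dominates (hA : IsDigraph A) :
    (relMatrix (Dominates A)).map Complex.ofRealHom = A := by
  ext x y
  rcases hA.1 x y with h | h <;> simp [relMatrix_apply, Dominates, h]

lemma IsTournament.relMatrix_add_transpose (hA : IsTournament A) :
    relMatrix (Dominates A) + (relMatrix (Dominates A))ᵀ = J - 1 := by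
  apply Matrix.map_injective Complex.ofReal_injective
  calc (relMatrix (Dominates A) + (relMatrix (Dominates A))ᵀ).map Complex.ofRealHom
      = A + Aᵀ := by
        rw [Matrix.map_add _ (map_add _), transpose_map, hA.1.map_relMatrix_dominates]
    _ = J - 1 := hA.2
    _ = (J - 1 : Matrix (Fin v) (Fin v) ℝ).map Complex.ofRealHom := by
        rw [Matrix.map_sub _ (map_sub _), Matrix.map_one _ (map_zero _) (map_one _)]
        ext
        simp

lemma IsDRT.card_dominates (hA : IsDRT A) (x : Fin v) :
    (#{y | Dominates A x y} : ℝ) = (v - 1) / 2 := by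
  have hv := hA.2.1
  have hcard : #{y | Dominates A x y} = (v - 1) / 2 := hA.2.2.1 x
  rw [hcard, Nat.cast_div (by omega) two_ne_zero, Nat.cast_sub (by omega)]
  norm_num

lemma IsDRT.card_dominates_and_dominates (hA : IsDRT A) {x y : Fin v} (hxy : x ≠ y) :
    (#{z | Dominates A x z ∧ Dominates A y z} : ℝ) = (v - 3) / 4 := by
  have hv := hA.2.1
  have hcard : #{z | Dominates A x z ∧ Dominates A y z} = (v - 3) / 4 := hA.2.2.2 x y hxy
  rw [hcard, Nat.cast_div (by omega) four_ne_zero, Nat.cast_sub (by omega)]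
  norm_num

lemma IsDRT.relMatrix_mul_ones (hA : IsDRT A) :
    relMatrix (Dominates A) * J = (((v : ℝ) - 1) / 2) • (J : Matrix (Fin v) (Fin v) ℝ) := by
  ext x y
  rw [relMatrix_mul_ones_apply, hA.card_dominates]
  simp

lemma IsDRT.relMatrix_mul_transpose (hA : IsDRT A) :
    relMatrix (Dominates A) * (relMatrix (Dominates A))ᵀ =
      (((v : ℝ) - 1) / 2 - (v - 3) / 4) • 1 + (((v : ℝ) - 3) / 4) • J := by
  ext x y
  rw [relMatrix_mul_transpose_apply]
  rcases eq_or_ne x y with rfl | hxy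
  · simp [hA.card_dominates]
  · simp [hA.card_dominates_and_dominates hxy, hxy]

lemma IsDRT.transpose_skewMatrix_mul_skewMatrix (hA : IsDRT A) :
    (skewMatrix (Dominates A))ᵀ * skewMatrix (Dominates A) = (v : ℝ) • 1 + (-1 : ℝ) • J := by
  rw [skewMatrix, transpose_mul_self_sub_transpose _ hA.1.relMatrix_add_transpose
    hA.relMatrix_mul_ones hA.relMatrix_mul_transpose, Fintype.card_fin]
  congr 2 <;> ring

lemma IsTransSubtournament.strictlyTotallyOrders {T : Finset (Fin v)}
    (hT : IsTransSubtournament A T) (hA : IsDigraph A) :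
    StrictlyTotallyOrders (Dominates A) T where
  irrefl x _ := by simp [Dominates, hA.2 x]
  trans := hT.2
  connected x hx y hy hxy := Xor.or (hT.1 x hx y hy hxy)

end DoublyRegular

lemma le_neg_three_add_sqrt_div_two {s v : ℝ} (hs : 0 ≤ s) (hv : 0 ≤ v)
    (h : s * (s ^ 2 - 1) / 3 ≤ v * s - s ^ 2) : s ≤ (-3 + √(13 + 12 * v)) / 2 := by
  have hsq : (2 * s + 3) ^ 2 ≤ 13 + 12 * v := by
    rcases hs.eq_or_lt with rfl | hpos
    · linarith
    · have hcancel : s ^ 2 + 3 * s - 1 ≤ 3 * v := le_of_mul_le_mul_left (by linarith) hpos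
      linarith
  linarith [Real.le_sqrt_of_sq_le hsq]

/-- If a doubly regular tournament on `v` vertices contains a transitive subtournament of
size `s`, then `s ≤ (−3 + √(13 + 12v))/2`. -/
theorem hoffman_type_bound_doubly_regular_tournament
    {v s : ℕ} (A : Matrix (Fin v) (Fin v) ℂ) (hA : IsDRT A)
    (T : Finset (Fin v)) (hT : IsTransSubtournament A T) (hTcard : T.card = s) :
    (s : ℝ) ≤ (-3 + Real.sqrt (13 + 12 * (v : ℝ))) / 2 := by
  subst hTcard
  have hbound := (hT.strictlyTotallyOrders hA.1.1).card_mul_card_sq_sub_one_div_three_le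
    hA.transpose_skewMatrix_mul_skewMatrix
  exact le_neg_three_add_sqrt_div_two (Nat.cast_nonneg _) (Nat.cast_nonneg v) (by linarith)
end

section
/- Let G be a doubly regular tournament on v vertices with Seidel matrix S_G = i(A − Aᵀ). Then the eigenvalues of S_G are 0 with multiplicity 1, √v with multiplicity (v−1)/2, and −√v with multiplicity (v−1)/2. -/
open Matrix Finset

/-!
Let `J` be the all-ones matrix. Regularity gives `A * J = ((v - 1) / 2) • J`, and double regularity
says that `A * Aᵀ` is a combination of `1` and `J`. Since `A - Aᵀ = 2 • A + 1 - J` is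
skew-symmetric, `S ^ 2 = (A - Aᵀ) * (A - Aᵀ)ᵀ` expands to `v • 1 - J`; also `S * J = 0`, so
`S ^ 3 = v • S` and every eigenvalue is `0` or `±√v`. The multiplicities are then read off from
`tr S = 0` and `tr (S ^ 2) = v * (v - 1)`.
-/

section ThreeValuedFunctions

variable {R : Type*} [CommRing R] [NoZeroDivisors R] {r : R}

theorem eq_zero_or_eq_or_eq_neg_of_pow_three_eq {x : R} (h : x ^ 3 = r ^ 2 * x) :
    x = 0 ∨ x = r ∨ x = -r := by
  have hfactor : x * (x ^ 2 - r ^ 2) = 0 := by linear_combination h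
  exact (mul_eq_zero.mp hfactor).imp_right fun hsq =>
    sq_eq_sq_iff_eq_or_eq_neg.mp (sub_eq_zero.mp hsq)

variable [CharZero R] [DecidableEq R] {ι : Type*} [Fintype ι] {f : ι → R}

theorem sum_comp_eq_of_forall_eq_zero_or_eq_or_eq_neg {M : Type*} [AddCommMonoid M] (hr : r ≠ 0)
    (hf : ∀ i, f i = 0 ∨ f i = r ∨ f i = -r) (g : R → M) :
    ∑ i, g (f i) = #{i | f i = 0} • g 0 + #{i | f i = r} • g r + #{i | f i = -r} • g (-r) := by
  have hmaps : ∀ i ∈ univ, f i ∈ ({0, r, -r} : Finset R) := fun i _ => by simpa using hf i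
  have hr_ne_neg : r ≠ -r := self_ne_neg.mpr hr
  rw [← sum_fiberwise_of_maps_to' hmaps g, sum_insert (by simp [hr, hr.symm]), sum_pair hr_ne_neg]
  simp only [sum_const, add_assoc]

theorem card_eq_card_neg_of_sum_eq_zero (hr : r ≠ 0)
    (hf : ∀ i, f i = 0 ∨ f i = r ∨ f i = -r) (hsum : ∑ i, f i = 0) :
    #{i | f i = r} = #{i | f i = -r} := by
  have hfiber := sum_comp_eq_of_forall_eq_zero_or_eq_or_eq_neg hr hf id
  simp only [id, hsum, nsmul_eq_mul] at hfiber
  have hmul : r * (#{i | f i = r} : R) = r * #{i | f i = -r} := by linear_combination -hfiber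
  exact_mod_cast mul_left_cancel₀ hr hmul

theorem sum_sq_eq_sq_mul_card_add_card_neg (hr : r ≠ 0)
    (hf : ∀ i, f i = 0 ∨ f i = r ∨ f i = -r) :
    ∑ i, f i ^ 2 = r ^ 2 * (#{i | f i = r} + #{i | f i = -r} : ℕ) := by
  rw [sum_comp_eq_of_forall_eq_zero_or_eq_or_eq_neg hr hf (· ^ 2)]
  simp only [nsmul_eq_mul]
  push_cast
  ring

theorem card_zero_add_card_add_card_neg (hr : r ≠ 0)
    (hf : ∀ i, f i = 0 ∨ f i = r ∨ f i = -r) :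
    #{i | f i = 0} + #{i | f i = r} + #{i | f i = -r} = Fintype.card ι := by
  have hfiber := sum_comp_eq_of_forall_eq_zero_or_eq_or_eq_neg hr hf fun _ => 1
  simpa only [sum_const, card_univ, smul_eq_mul, mul_one] using hfiber.symm

end ThreeValuedFunctions

section HermitianMatrices

variable {n 𝕜 : Type*} [Fintype n] [DecidableEq n] [RCLike 𝕜] {M : Matrix n n 𝕜}

theorem eval_eigenvalues_eq_zero_of_aeval_eq_zero (hM : M.IsHermitian) {p : Polynomial ℝ}
    (hp : Polynomial.aeval M p = 0) (i : n) : p.eval (hM.eigenvalues i) = 0 := by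
  have : Nonempty n := ⟨i⟩
  have hmem := spectrum.subset_polynomial_aeval M p
    (Set.mem_image_of_mem _ (hM.eigenvalues_mem_spectrum_real i))
  simpa only [hp, spectrum.zero_eq, Set.mem_singleton_iff] using hmem

theorem trace_pow_eq_sum_eigenvalues_pow (hM : M.IsHermitian) (k : ℕ) :
    (M ^ k).trace = ∑ i, (hM.eigenvalues i : 𝕜) ^ k := by
  have hdiagonalized : M ^ k = Unitary.conjStarAlgAut 𝕜 _ hM.eigenvectorUnitary
      (diagonal fun i => (hM.eigenvalues i : 𝕜) ^ k) := by
    conv_lhs => rw [hM.spectral_theorem, ← map_pow, diagonal_pow]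
    rfl
  rw [hdiagonalized, Unitary.conjStarAlgAut_apply, trace_mul_cycle, Unitary.coe_star_mul_self,
    one_mul, trace_diagonal]

end HermitianMatrices

section AllOnes

/-- The all-ones matrix `J`. It unfolds to the expression `Matrix.of fun _ _ => 1` appearing in
`IsTournament`. -/
def allOnes (n R : Type*) [One R] : Matrix n n R :=
  Matrix.of fun _ _ => 1

variable {n R : Type*}

theorem transpose_allOnes [One R] : (allOnes n R)ᵀ = allOnes n R :=
  rfl

theorem mul_allOnes_of_row_sum [Fintype n] [NonAssocSemiring R] {M : Matrix n n R} {k : R}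
    (hM : ∀ x, ∑ y, M x y = k) : M * allOnes n R = k • allOnes n R := by
  ext x y
  simp [allOnes, Matrix.mul_apply, hM]

theorem allOnes_mul_allOnes [Fintype n] [NonAssocSemiring R] :
    allOnes n R * allOnes n R = (Fintype.card n : R) • allOnes n R :=
  mul_allOnes_of_row_sum fun _ => by simp [allOnes]

theorem trace_allOnes [Fintype n] [AddCommMonoidWithOne R] :
    (allOnes n R).trace = Fintype.card n := by
  simp [allOnes, Matrix.trace]

end AllOnes

section Tournaments

variable {v : ℕ} {A : Matrix (Fin v) (Fin v) ℂ}

theorem IsDigraph.row_sum (hA : IsDigraph A) (x : Fin v) :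
    ∑ y, A x y = #{y | A x y = 1} := by
  rw [natCast_card_filter]
  refine sum_congr rfl fun y _ => ?_
  rcases hA.1 x y with h | h <;> simp [h]

theorem IsDigraph.mul_transpose_apply (hA : IsDigraph A) (x y : Fin v) :
    (A * Aᵀ) x y = #{z | A x z = 1 ∧ A y z = 1} := by
  rw [natCast_card_filter, Matrix.mul_apply]
  refine sum_congr rfl fun z _ => ?_
  rcases hA.1 x z with hx | hx <;> rcases hA.1 y z with hy | hy <;> simp [hx, hy]

theorem IsTournament.add_transpose (hA : IsTournament A) : A + Aᵀ = allOnes (Fin v) ℂ - 1 :=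
  hA.2

theorem IsTournament.sub_transpose (hA : IsTournament A) :
    A - Aᵀ = (2 : ℂ) • A + 1 - allOnes (Fin v) ℂ := by
  rw [eq_sub_of_add_eq' hA.add_transpose]
  module

theorem seidel_sq_eq_mul_transpose (A : Matrix (Fin v) (Fin v) ℂ) :
    Seidel A ^ 2 = (A - Aᵀ) * (A - Aᵀ)ᵀ := by
  have hskew : (A - Aᵀ)ᵀ = -(A - Aᵀ) := by simp
  rw [hskew, Seidel, smul_pow, Complex.I_sq, neg_one_smul, sq, mul_neg]

theorem trace_seidel (A : Matrix (Fin v) (Fin v) ℂ) : (Seidel A).trace = 0 := by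
  simp [Seidel]

theorem IsDRT.row_sum (hA : IsDRT A) (x : Fin v) : ∑ y, A x y = ((v : ℂ) - 1) / 2 := by
  obtain ⟨⟨hdigraph, -⟩, hmod, hdeg, -⟩ := hA
  have hhalf : ((2 * ((v - 1) / 2) + 1 : ℕ) : ℂ) = v := by congr 1; omega
  rw [hdigraph.row_sum, hdeg, ← hhalf]
  push_cast
  ring

theorem IsDRT.mul_allOnes (hA : IsDRT A) :
    A * allOnes (Fin v) ℂ = (((v : ℂ) - 1) / 2) • allOnes (Fin v) ℂ :=
  mul_allOnes_of_row_sum hA.row_sum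

theorem IsDRT.allOnes_mul_transpose (hA : IsDRT A) :
    allOnes (Fin v) ℂ * Aᵀ = (((v : ℂ) - 1) / 2) • allOnes (Fin v) ℂ := by
  simpa only [transpose_mul, transpose_smul, transpose_allOnes]
    using congrArg Matrix.transpose hA.mul_allOnes

theorem IsDRT.mul_transpose (hA : IsDRT A) :
    A * Aᵀ = (((v : ℂ) + 1) / 4) • 1 + (((v : ℂ) - 3) / 4) • allOnes (Fin v) ℂ := by
  have hdigraph : IsDigraph A := hA.1.1
  ext x y
  obtain rfl | hxy := eq_or_ne x y
  · have hdiag : (A * Aᵀ) x x = ((v : ℂ) - 1) / 2 := by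
      rw [hdigraph.mul_transpose_apply, ← hA.row_sum x, hdigraph.row_sum]
      simp only [and_self]
    simp only [hdiag, allOnes, Matrix.add_apply, Matrix.smul_apply, one_apply_eq, of_apply,
      smul_eq_mul]
    ring
  · obtain ⟨-, hmod, -, hcommon⟩ := hA
    have hquarter : ((4 * ((v - 3) / 4) + 3 : ℕ) : ℂ) = v := by congr 1; omega
    have hoff : (A * Aᵀ) x y = ((v : ℂ) - 3) / 4 := by
      rw [hdigraph.mul_transpose_apply, hcommon x y hxy, ← hquarter]
      push_cast
      ring
    simp [hoff, allOnes, hxy]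

theorem IsDRT.seidel_mul_allOnes (hA : IsDRT A) : Seidel A * allOnes (Fin v) ℂ = 0 := by
  rw [Seidel, hA.1.sub_transpose, smul_mul_assoc, sub_mul, add_mul, smul_mul_assoc, one_mul,
    hA.mul_allOnes, allOnes_mul_allOnes, Fintype.card_fin]
  module

theorem IsDRT.seidel_sq (hA : IsDRT A) :
    Seidel A ^ 2 = (v : ℂ) • 1 - allOnes (Fin v) ℂ := by
  set J := allOnes (Fin v) ℂ
  calc Seidel A ^ 2
      = ((2 : ℂ) • A + 1 - J) * ((2 : ℂ) • Aᵀ + 1 - J) := by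
        rw [seidel_sq_eq_mul_transpose, hA.1.sub_transpose, transpose_sub, transpose_add,
          transpose_smul, transpose_one, transpose_allOnes]
    _ = (4 : ℂ) • (A * Aᵀ) + (2 : ℂ) • (A + Aᵀ) + 1 - (2 : ℂ) • J + J * J
          - (2 : ℂ) • (A * J) - (2 : ℂ) • (J * Aᵀ) := by
        simp only [add_mul, sub_mul, mul_add, mul_sub, smul_mul_assoc, mul_smul_comm,
          one_mul, mul_one]
        module
    _ = (v : ℂ) • 1 - J := by
        rw [hA.mul_transpose, hA.1.add_transpose, hA.mul_allOnes, hA.allOnes_mul_transpose,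
          allOnes_mul_allOnes, Fintype.card_fin]
        module

theorem IsDRT.seidel_pow_three (hA : IsDRT A) : Seidel A ^ 3 = (v : ℂ) • Seidel A := by
  rw [pow_succ', hA.seidel_sq, mul_sub, mul_smul_comm, mul_one, hA.seidel_mul_allOnes, sub_zero]

theorem IsDRT.trace_seidel_sq (hA : IsDRT A) :
    (Seidel A ^ 2).trace = (v : ℂ) * ((v : ℂ) - 1) := by
  rw [hA.seidel_sq, trace_sub, trace_smul, trace_one, trace_allOnes, Fintype.card_fin, smul_eq_mul]
  ring

theorem IsDRT.eigenvalues_seidel_eq_zero_or_eq_or_eq_neg (hA : IsDRT A)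
    (hH : (Seidel A).IsHermitian) (i : Fin v) :
    hH.eigenvalues i = 0 ∨ hH.eigenvalues i = √v ∨ hH.eigenvalues i = -√v := by
  open Polynomial in
  have haeval : aeval (Seidel A) (X ^ 3 - C (v : ℝ) * X) = 0 := by
    simp [hA.seidel_pow_three, Algebra.smul_def]
  have hroot := eval_eigenvalues_eq_zero_of_aeval_eq_zero hH haeval i
  apply eq_zero_or_eq_or_eq_neg_of_pow_three_eq
  rw [Real.sq_sqrt v.cast_nonneg]
  simpa [sub_eq_zero] using hroot

theorem sum_eigenvalues_seidel (hH : (Seidel A).IsHermitian) : ∑ i, hH.eigenvalues i = 0 := by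
  have htrace := hH.trace_eq_sum_eigenvalues
  rw [trace_seidel] at htrace
  apply Complex.ofReal_injective
  push_cast
  exact htrace.symm

theorem IsDRT.sum_eigenvalues_seidel_sq (hA : IsDRT A) (hH : (Seidel A).IsHermitian) :
    ∑ i, hH.eigenvalues i ^ 2 = (v : ℝ) * ((v : ℝ) - 1) := by
  have htrace := trace_pow_eq_sum_eigenvalues_pow hH 2
  rw [hA.trace_seidel_sq] at htrace
  apply Complex.ofReal_injective
  push_cast
  exact htrace.symm

end Tournaments

/-- The Seidel matrix of a doubly regular tournament on `v` vertices has eigenvalue `0`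
with multiplicity `1` and eigenvalues `±√v` each with multiplicity `(v-1)/2`. -/
theorem seidel_eigenvalues_doubly_regular_tournament
    {v : ℕ} (A : Matrix (Fin v) (Fin v) ℂ) (hA : IsDRT A)
    (hH : (Seidel A).IsHermitian) :
    (univ.filter fun i => hH.eigenvalues i = 0).card = 1 ∧
    (univ.filter fun i => hH.eigenvalues i = Real.sqrt v).card = (v - 1) / 2 ∧
    (univ.filter fun i => hH.eigenvalues i = -Real.sqrt v).card = (v - 1) / 2 := by
  have hmod : v % 4 = 3 := hA.2.1
  have hv : (v : ℝ) ≠ 0 := Nat.cast_ne_zero.mpr (by omega)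
  have hsqrt : √(v : ℝ) ≠ 0 := Real.sqrt_ne_zero'.mpr (by positivity)
  have hvalues := hA.eigenvalues_seidel_eq_zero_or_eq_or_eq_neg hH
  have hbalanced := card_eq_card_neg_of_sum_eq_zero hsqrt hvalues (sum_eigenvalues_seidel hH)
  have hnonzero : #{i | hH.eigenvalues i = √v} + #{i | hH.eigenvalues i = -√v} = v - 1 := by
    have hsq := sum_sq_eq_sq_mul_card_add_card_neg hsqrt hvalues
    rw [hA.sum_eigenvalues_seidel_sq hH, Real.sq_sqrt v.cast_nonneg] at hsq
    have hcard := mul_left_cancel₀ hv hsq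
    rw [← Nat.cast_pred (by omega)] at hcard
    exact_mod_cast hcard.symm
  have htotal := card_zero_add_card_add_card_neg hsqrt hvalues
  rw [Fintype.card_fin] at htotal
  omega
end

section
/- Let G be a doubly regular tournament on v = 4m−1 vertices (m ≥ 1) containing a transitive subtournament of size s. Then s ≤ −1 + ⌊√(1+12m)⌋. -/
open Matrix Finset

/-!
Let `d x` be the number of arcs from `T` into `x`. Double counting expresses `∑ x, d x` and
`∑ x, (d x) ^ 2` through the number `2m - 1` of out-neighbours of each vertex of `T` and the number
`m - 1` of common out-neighbours of each pair, and gives `∑ x, (2 d x - s) ^ 2 = s (4m - s)`.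
Transitivity makes `d` a bijection from `T` onto `{0, …, s - 1}`, so the vertices of `T` alone
contribute `∑_{i < s} (2 i - s) ^ 2 = s (s ^ 2 + 2) / 3`. Hence `(s + 1) (s + 2) ≤ 12 m`.
-/

section DoubleCounting

variable {α β : Type*} [Fintype β] {r : α → β → Prop} [DecidableRel r]
  {T : Finset α} {k l m : ℕ}

theorem sum_card_bipartiteBelow_eq_card_mul (hdeg : ∀ a ∈ T, #{b | r a b} = k) :
    ∑ b, #(T.bipartiteBelow r b) = #T * k := by
  rw [← sum_card_bipartiteAbove_eq_sum_card_bipartiteBelow]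
  exact sum_const_nat hdeg

variable (r T) in
theorem sum_card_bipartiteBelow_sq :
    ∑ b, #(T.bipartiteBelow r b) ^ 2 = ∑ a ∈ T, ∑ a' ∈ T, #{b | r a b ∧ r a' b} := by
  have pairs_into (b : β) : #(T.bipartiteBelow r b) ^ 2 =
      #((T ×ˢ T).bipartiteBelow (fun p b => r p.1 b ∧ r p.2 b) b) := by
    rw [sq, ← card_product]
    exact congrArg card (filter_product (r · b) (r · b)).symm
  simp only [pairs_into, ← sum_card_bipartiteAbove_eq_sum_card_bipartiteBelow, sum_product,
    bipartiteAbove]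

theorem sum_card_bipartiteBelow_sq_eq_card_mul (hdeg : ∀ a ∈ T, #{b | r a b} = k)
    (hcommon : ∀ a ∈ T, ∀ a' ∈ T, a ≠ a' → #{b | r a b ∧ r a' b} = l) :
    ∑ b, #(T.bipartiteBelow r b) ^ 2 = #T * (k + (#T - 1) * l) := by
  classical
  rw [sum_card_bipartiteBelow_sq]
  refine sum_const_nat fun a ha => ?_
  have diagonal : #{b | r a b ∧ r a b} = k := by simpa only [and_self] using hdeg a ha
  have off_diagonal : ∑ a' ∈ T.erase a, #{b | r a b ∧ r a' b} = (#T - 1) * l := by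
    rw [← card_erase_of_mem ha]
    exact sum_const_nat fun a' ha' =>
      hcommon a ha a' (mem_of_mem_erase ha') (ne_of_mem_erase ha').symm
  rw [← add_sum_erase T _ ha, diagonal, off_diagonal]

theorem sum_two_mul_card_bipartiteBelow_sub_sq (hdeg : ∀ a ∈ T, #{b | r a b} = k)
    (hcommon : ∀ a ∈ T, ∀ a' ∈ T, a ≠ a' → #{b | r a b ∧ r a' b} = l) (c : ℤ) :
    ∑ b, (2 * (#(T.bipartiteBelow r b) : ℤ) - c) ^ 2 =
      4 * (#T * (k + (#T - 1) * l)) - 4 * c * (#T * k) + Fintype.card β * c ^ 2 := by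
  have sum_deg : ∑ b, (#(T.bipartiteBelow r b) : ℤ) = #T * k := by
    exact_mod_cast sum_card_bipartiteBelow_eq_card_mul hdeg
  have sum_deg_sq : ∑ b, (#(T.bipartiteBelow r b) : ℤ) ^ 2 = #T * (k + (#T - 1) * l) := by
    rcases T.eq_empty_or_nonempty with rfl | hT
    · simp [bipartiteBelow]
    · rw [← Nat.cast_pred hT.card_pos]
      exact_mod_cast sum_card_bipartiteBelow_sq_eq_card_mul hdeg hcommon
  rw [← sum_deg, ← sum_deg_sq, ← card_univ, ← nsmul_eq_mul, ← sum_const, mul_sum, mul_sum,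
    ← sum_sub_distrib, ← sum_add_distrib]
  exact sum_congr rfl fun b _ => by ring

theorem sum_two_mul_card_bipartiteBelow_sub_card_sq (hcard : Fintype.card β + 1 = 4 * m)
    (hdeg : ∀ a ∈ T, #{b | r a b} + 1 = 2 * m)
    (hcommon : ∀ a ∈ T, ∀ a' ∈ T, a ≠ a' → #{b | r a b ∧ r a' b} + 1 = m) :
    ∑ b, (2 * (#(T.bipartiteBelow r b) : ℤ) - #T) ^ 2 = (#T : ℤ) * (4 * m - #T) := by
  obtain ⟨n, rfl⟩ : ∃ n, m = n + 1 := Nat.exists_eq_add_one.mpr (by lia)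
  have card_eq : Fintype.card β = 4 * n + 3 := by lia
  have deg_eq : ∀ a ∈ T, #{b | r a b} = 2 * n + 1 := fun a ha => by linarith [hdeg a ha]
  have common_eq : ∀ a ∈ T, ∀ a' ∈ T, a ≠ a' → #{b | r a b ∧ r a' b} = n :=
    fun a ha a' ha' hne => Nat.succ_injective (hcommon a ha a' ha' hne)
  rw [sum_two_mul_card_bipartiteBelow_sub_sq deg_eq common_eq, card_eq]
  push_cast
  ring

end DoubleCounting

/-- The relation `r` restricts to a strict linear order on `T`. When `r` is the arc relation of a
digraph, this says that `T` is a transitive subtournament. -/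
structure IsStrictLinearOrderOn {V : Type*} (r : V → V → Prop) (T : Finset V) : Prop where
  irrefl : ∀ x ∈ T, ¬ r x x
  trans : ∀ x ∈ T, ∀ y ∈ T, ∀ z ∈ T, r x y → r y z → r x z
  total : ∀ x ∈ T, ∀ y ∈ T, x ≠ y → r x y ∨ r y x

namespace IsStrictLinearOrderOn

variable {V : Type*} {r : V → V → Prop} [DecidableRel r] {T : Finset V}

theorem card_bipartiteBelow_lt_card (hT : IsStrictLinearOrderOn r T) {x : V} (hx : x ∈ T) :
    #(T.bipartiteBelow r x) < #T :=
  card_lt_card (filter_ssubset.mpr ⟨x, hx, hT.irrefl x hx⟩)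

theorem card_bipartiteBelow_lt_of_rel (hT : IsStrictLinearOrderOn r T) {x y : V} (hx : x ∈ T)
    (hy : y ∈ T) (hxy : r x y) : #(T.bipartiteBelow r x) < #(T.bipartiteBelow r y) := by
  refine card_lt_card (ssubset_iff_of_subset (fun z hz => ?_) |>.mpr ⟨x, ?_, ?_⟩)
  · rw [mem_bipartiteBelow] at hz ⊢
    exact ⟨hz.1, hT.trans z hz.1 x hx y hy hz.2 hxy⟩
  · exact mem_bipartiteBelow r |>.mpr ⟨hx, hxy⟩
  · exact fun hmem => hT.irrefl x hx (mem_bipartiteBelow r |>.mp hmem).2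

theorem injOn_card_bipartiteBelow (hT : IsStrictLinearOrderOn r T) :
    Set.InjOn (fun x => #(T.bipartiteBelow r x)) T := by
  intro x hx y hy heq
  by_contra hne
  rcases hT.total x hx y hy hne with hxy | hyx
  · exact (hT.card_bipartiteBelow_lt_of_rel hx hy hxy).ne heq
  · exact (hT.card_bipartiteBelow_lt_of_rel hy hx hyx).ne' heq

theorem image_card_bipartiteBelow (hT : IsStrictLinearOrderOn r T) :
    T.image (fun x => #(T.bipartiteBelow r x)) = range #T := by
  refine eq_of_subset_of_card_le (image_subset_iff.mpr fun x hx => ?_) ?_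
  · exact mem_range.mpr (hT.card_bipartiteBelow_lt_card hx)
  · rw [card_image_of_injOn hT.injOn_card_bipartiteBelow, card_range]

theorem sum_comp_card_bipartiteBelow {M : Type*} [AddCommMonoid M]
    (hT : IsStrictLinearOrderOn r T) (f : ℕ → M) :
    ∑ x ∈ T, f #(T.bipartiteBelow r x) = ∑ i ∈ range #T, f i := by
  rw [← hT.image_card_bipartiteBelow, sum_image hT.injOn_card_bipartiteBelow]

end IsStrictLinearOrderOn

theorem three_mul_sum_range_two_mul_sub_sq {R : Type*} [CommRing R] (n : ℕ) (c : R) :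
    3 * ∑ i ∈ range n, (2 * (i : R) - c) ^ 2 =
      2 * (n * (n - 1) * (2 * n - 1)) - 6 * c * (n * (n - 1)) + 3 * n * c ^ 2 := by
  induction n with
  | zero => simp
  | succ n ih =>
    rw [sum_range_succ, mul_add, ih]
    push_cast
    ring

section Bound

variable {V : Type*} [Fintype V] {r : V → V → Prop} [DecidableRel r] {T : Finset V} {m : ℕ}

theorem card_add_one_mul_card_add_two_le (hcard : Fintype.card V + 1 = 4 * m)
    (hdeg : ∀ x ∈ T, #{y | r x y} + 1 = 2 * m)
    (hcommon : ∀ x ∈ T, ∀ y ∈ T, x ≠ y → #{z | r x z ∧ r y z} + 1 = m)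
    (hT : IsStrictLinearOrderOn r T) : (#T + 1) * (#T + 2) ≤ 12 * m := by
  rcases T.eq_empty_or_nonempty with rfl | hne
  · rw [card_empty]
    lia
  have inside_le_total : ∑ i ∈ range #T, (2 * (i : ℤ) - #T) ^ 2 ≤ (#T : ℤ) * (4 * m - #T) := by
    rw [← hT.sum_comp_card_bipartiteBelow fun i => (2 * (i : ℤ) - #T) ^ 2,
      ← sum_two_mul_card_bipartiteBelow_sub_card_sq hcard hdeg hcommon]
    exact sum_le_univ_sum_of_nonneg fun _ => sq_nonneg _
  have card_mul_le : (#T : ℤ) * ((#T + 1) * (#T + 2)) ≤ #T * (12 * m) := by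
    linarith [three_mul_sum_range_two_mul_sub_sq #T (#T : ℤ)]
  exact_mod_cast le_of_mul_le_mul_left card_mul_le (by exact_mod_cast hne.card_pos)

theorem drt_bound_floor_sqrt_general (hcard : Fintype.card V + 1 = 4 * m)
    (hdeg : ∀ x ∈ T, #{y | r x y} + 1 = 2 * m)
    (hcommon : ∀ x ∈ T, ∀ y ∈ T, x ≠ y → #{z | r x z ∧ r y z} + 1 = m)
    (hT : IsStrictLinearOrderOn r T) :
    (#T : ℝ) ≤ -1 + (⌊√(1 + 12 * (m : ℝ))⌋ : ℝ) := by
  have sq_le : (#T + 1) ^ 2 ≤ 1 + 12 * m := by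
    linarith [card_add_one_mul_card_add_two_le hcard hdeg hcommon hT]
  have le_floor : ((#T + 1 : ℕ) : ℤ) ≤ ⌊√(1 + 12 * (m : ℝ))⌋ :=
    Int.le_floor.mpr (Real.le_sqrt_of_sq_le (by exact_mod_cast sq_le))
  rw [le_neg_add_iff_add_le, add_comm]
  exact_mod_cast le_floor

end Bound

theorem IsTransSubtournament.isStrictLinearOrderOn {v : ℕ} {A : Matrix (Fin v) (Fin v) ℂ}
    {T : Finset (Fin v)} (hT : IsTransSubtournament A T) (hA : IsDigraph A) :
    IsStrictLinearOrderOn (fun x y => A x y = 1) T where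
  irrefl x _ := by simp [hA.2 x]
  trans := hT.2
  total x hx y hy hne := Xor.or (hT.1 x hx y hy hne)

/-- If a doubly regular tournament on `v = 4m-1` vertices contains a transitive
subtournament of size `s`, then `s ≤ -1 + ⌊√(1+12m)⌋`. -/
theorem drt_bound_floor_sqrt
    {m s : ℕ} (hm : 1 ≤ m)
    (A : Matrix (Fin (4 * m - 1)) (Fin (4 * m - 1)) ℂ) (hA : IsDRT A)
    (T : Finset (Fin (4 * m - 1))) (hT : IsTransSubtournament A T) (hTcard : T.card = s) :
    (s : ℝ) ≤ -1 + (⌊Real.sqrt (1 + 12 * (m : ℝ))⌋ : ℝ) := by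
  subst hTcard
  let _ : DecidableRel fun x y => A x y = 1 := fun _ _ => inferInstance
  obtain ⟨⟨hdigraph, -⟩, -, hdeg, hcommon⟩ := hA
  exact drt_bound_floor_sqrt_general (by rw [Fintype.card_fin]; lia)
    (fun x _ => by rw [hdeg]; lia) (fun x _ y _ hne => by rw [hcommon x y hne]; lia)
    (hT.isStrictLinearOrderOn hdigraph)
end
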